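/- In the Wilson–Xiang setting, assume |A| = (q+3)/2, |B| = (q−1)/2 and |A_e| + |B_o| = |A_o| + |B_e|, and set E_1 = D_1 ∪ D_2 ∪ D_3. If (a,b) ∈ F_{q²} × F_{q²} and exactly one of a, b is zero, then ψ_{a,b}(E_1) = (−3q²−1)/4 if b = 0 and a ∈ C_{τ+1}^{(2,q²)}, and ψ_{a,b}(E_1) = (q²−1)/4 otherwise. -/

import Mathlib

/-!
Write `K = F_q` and `L = F_{q²}`. The quadratic character `χ` of `L` is trivial on `Kˣ`, so by
Stickelberger's theorem its Gauss sum `G` equals `±q`, the sign depending on `q` modulo 4. Hence the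
sum of `ψ(ay)` over `χ(y) = (-1)^e` is `(-1 + (-1)^e χ(a) G) / 2`. In terms of `u = xy` and
`s = x²`, the pair `(xy, xy⁻¹ω^i)` is `(u, u⁻¹sω^i)`, which parametrizes `D₂` and `D₃` injectively
by a square class of `u`, the nonzero squares `s` of `K`, and `i`. Since `χ(u⁻¹sω^i) = (-1)^i χ(u)`,
the sum `ψ_{a,0}(E₁)` depends on `A` and `B` only through `|A|` and `|B|`, and `ψ_{0,b}(E₁)` only
through `|A| + |B|` and the difference of the parity imbalances of `A` and `B`, which vanishes.
-/

noncomputable section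

def zetaP (p : ℕ) : ℂ := Complex.exp (2 * Real.pi * Complex.I / p)

/-- The canonical additive character `ψ(x) = ζ_p^{Tr_{L/F_p}(x)}`. -/
def psiL (p : ℕ) (L : Type) [Field L] [Fintype L] [CharP L p] (x : L) : ℂ :=
  letI : Algebra (ZMod p) L := ZMod.algebra L p
  zetaP p ^ (Algebra.trace (ZMod p) L x).val

/-- `ψ_{a,b}(E) = Σ_{(x,y)∈E} ψ(ax+by)`. -/
def psiSum (p : ℕ) (L : Type) [Field L] [Fintype L] [CharP L p]
    (a b : L) (E : Set (L × L)) : ℂ :=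
  ∑ᶠ z ∈ E, psiL p L (a * z.1 + b * z.2)

/-- a subset of `F_{q²} × F_{q²}` of type Q. -/
def IsTypeQ (p q : ℕ) (L : Type) [Field L] [Fintype L] [CharP L p]
    (E : Set (L × L)) : Prop :=
  E.ncard = (q ^ 4 - 1) / 4 ∧
    ∀ a b : L, (a, b) ≠ ((0 : L), (0 : L)) →
      psiSum p L a b E = ((q : ℂ) ^ 2 - 1) / 4 ∨
      psiSum p L a b E = (-3 * (q : ℂ) ^ 2 - 1) / 4

/-- the cyclotomic class `C_i^{(N,q²)} = ω^i⟨ω^N⟩`. -/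
def cyc (L : Type) [Field L] (ω : L) (N i : ℕ) : Set L :=
  {x | ∃ k : ℕ, x = ω ^ i * (ω ^ N) ^ k}

/-- ω is a primitive element (generator of the multiplicative group). -/
def IsPrim (L : Type) [Field L] (ω : L) : Prop :=
  ∀ x : L, x ≠ 0 → ∃ n : ℕ, x = ω ^ n

/-- nonzero squares of `K` -/
def sqSet (K : Type) [Field K] : Set K := {y | ∃ z : K, z ≠ 0 ∧ y = z ^ 2}

section QuadraticCharacter

open scoped Finset

variable {F : Type*} [Field F] [Fintype F] [DecidableEq F]

/-- The quadratic character of `F` with complex values, as needed for Gauss sums against complex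
additive characters. -/
abbrev complexQuadraticChar (F : Type*) [Field F] [Fintype F] [DecidableEq F] : MulChar F ℂ :=
  (quadraticChar F).ringHomComp (Int.castRingHom ℂ)

lemma complexQuadraticChar_ne_one (hF : ringChar F ≠ 2) : complexQuadraticChar F ≠ 1 :=
  (MulChar.ringHomComp_ne_one_iff Int.cast_injective).2 (quadraticChar_ne_one hF)

lemma quadraticChar_inv (a : F) : quadraticChar F a⁻¹ = quadraticChar F a := by
  rw [← MulChar.inv_apply', (quadraticChar_isQuadratic F).inv]

lemma pow_card_div_two_eq_one_of_quadraticChar_eq_one (hF : ringChar F ≠ 2) {a : F}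
    (ha : quadraticChar F a = 1) : a ^ (Fintype.card F / 2) = 1 := by
  rw [← quadraticChar_eq_pow_of_char_ne_two' hF, ha, Int.cast_one]

lemma sum_quadraticChar_eq_neg_one_pow (ψ : AddChar F ℂ) (e : ℕ) :
    ∑ y with quadraticChar F y = (-1) ^ e, ψ y =
      (∑ y, ψ y - 1 + (-1) ^ e * gaussSum (complexQuadraticChar F) ψ) / 2 := by
  have indicator (y : F) : (if quadraticChar F y = (-1) ^ e then ψ y else 0) =
      (ψ y - (if y = 0 then 1 else 0) +
        (-1) ^ e * (complexQuadraticChar F y * ψ y)) / 2 := by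
    rcases eq_or_ne y 0 with rfl | hy
    · rcases neg_one_pow_eq_or ℤ e with he | he <;> simp [he]
    · rcases neg_one_pow_eq_or ℤ e with he | he <;>
        have he' := congrArg (Int.cast : ℤ → ℂ) he <;> push_cast at he' <;>
        rcases quadraticChar_dichotomy hy with h | h <;> simp [he, he', h, hy]
  rw [Finset.sum_filter, Finset.sum_congr rfl fun y _ => indicator y, ← Finset.sum_div,
    Finset.sum_add_distrib, Finset.sum_sub_distrib, ← Finset.mul_sum]
  simp [gaussSum]

lemma card_quadraticChar_eq_neg_one_pow (hF : ringChar F ≠ 2) (e : ℕ) :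
    (#{y | quadraticChar F y = (-1) ^ e} : ℂ) = (Fintype.card F - 1) / 2 := by
  simpa [gaussSum_one_right (complexQuadraticChar_ne_one hF)] using
    sum_quadraticChar_eq_neg_one_pow (1 : AddChar F ℂ) e

lemma sum_quadraticChar_eq_neg_one_pow_mul {ψ : AddChar F ℂ} (hψ : ψ ≠ 1) {a : F} (ha : a ≠ 0)
    (e : ℕ) :
    ∑ y with quadraticChar F y = (-1) ^ e, ψ (a * y) =
      (-1 + (-1) ^ e * (quadraticChar F a * gaussSum (complexQuadraticChar F) ψ)) / 2 := by
  have sum_eq_zero : ∑ y, ψ.mulShift a y = 0 := AddChar.sum_eq_zero_of_ne_one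
    (mt (AddChar.mulShift_unit_eq_one_iff ψ ha.isUnit).1 hψ)
  have gauss : gaussSum (complexQuadraticChar F) (ψ.mulShift a) =
      quadraticChar F a * gaussSum (complexQuadraticChar F) ψ := by
    have hsq : (quadraticChar F a : ℂ) ^ 2 = 1 := mod_cast quadraticChar_sq_one ha
    have h := gaussSum_mulShift (complexQuadraticChar F) ψ (Units.mk0 a ha)
    rw [Units.val_mk0, MulChar.ringHomComp_apply, eq_intCast] at h
    linear_combination quadraticChar F a * h -
      gaussSum (complexQuadraticChar F) (ψ.mulShift a) * hsq
  have h := sum_quadraticChar_eq_neg_one_pow (ψ.mulShift a) e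
  rw [sum_eq_zero, gauss, zero_sub] at h
  exact h

end QuadraticCharacter

section PrimitiveElement

variable {L : Type} [Field L] [Fintype L] {ω : L}

omit [Fintype L] in
lemma IsPrim.ne_zero (hL : ringChar L ≠ 2) (hω : IsPrim L ω) : ω ≠ 0 := by
  rintro rfl
  obtain ⟨n, hn⟩ := hω (-1) (neg_ne_zero.2 one_ne_zero)
  rcases eq_or_ne n 0 with rfl | hn0
  · exact Ring.neg_one_ne_one_of_char_ne_two hL (hn.trans (pow_zero 0))
  · simp [hn0] at hn

lemma IsPrim.quadraticChar_eq_neg_one [DecidableEq L] (hL : ringChar L ≠ 2) (hω : IsPrim L ω) :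
    quadraticChar L ω = -1 := by
  obtain ⟨a, ha⟩ := quadraticChar_exists_neg_one' hL
  obtain ⟨n, hn⟩ := hω a a.ne_zero
  rw [hn, map_pow] at ha
  rcases quadraticChar_isQuadratic L ω with h | h | h
  · rw [h] at ha
    rcases eq_or_ne n 0 with rfl | hn
    · norm_num at ha
    · simp [hn] at ha
  · norm_num [h] at ha
  · exact h

lemma IsPrim.orderOf_eq (hL : ringChar L ≠ 2) (hω : IsPrim L ω) :
    orderOf ω = Fintype.card L - 1 := by
  classical
  have h := orderOf_eq_card_of_forall_mem_powers (g := Units.mk0 ω (hω.ne_zero hL)) fun x => by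
    obtain ⟨n, hn⟩ := hω x x.ne_zero
    exact ⟨n, by ext; simp [hn]⟩
  rwa [← orderOf_units, Units.val_mk0, Nat.card_eq_fintype_card, Fintype.card_units] at h

lemma mem_cyc_two_iff [DecidableEq L] (hL : ringChar L ≠ 2) (hω : IsPrim L ω) {i : ℕ} {x : L} :
    x ∈ cyc L ω 2 i ↔ quadraticChar L x = (-1) ^ i := by
  have hω0 := hω.ne_zero hL
  constructor
  · rintro ⟨k, rfl⟩
    rw [map_mul, map_pow, map_pow, quadraticChar_sq_one' hω0, one_pow, mul_one,
      hω.quadraticChar_eq_neg_one hL]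
  · intro h
    have hx : x ≠ 0 := by
      rintro rfl
      exact pow_ne_zero i (by norm_num) (quadraticChar_zero.symm.trans h).symm
    have hx' : x / ω ^ i ≠ 0 := div_ne_zero hx (pow_ne_zero i hω0)
    have hχ : quadraticChar L (x / ω ^ i) = 1 := by
      rw [div_eq_mul_inv, map_mul, quadraticChar_inv, map_pow, h,
        hω.quadraticChar_eq_neg_one hL, ← mul_pow]
      simp
    obtain ⟨z, hz⟩ := (quadraticChar_one_iff_isSquare hx').1 hχ
    obtain ⟨k, rfl⟩ := hω z (by rintro rfl; simp_all)
    refine ⟨k, ?_⟩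
    rw [div_eq_iff (pow_ne_zero i hω0)] at hz
    rw [hz]
    ring

end PrimitiveElement

section QuadraticExtension

variable {K L : Type*} [Field K] [Fintype K] [Field L] [Fintype L] [Algebra K L]

lemma card_eq_sq_of_finrank_eq_two (hKL : Module.finrank K L = 2) :
    Fintype.card L = Fintype.card K ^ 2 := by
  rw [Module.card_eq_pow_finrank (K := K), hKL]

lemma card_div_two_of_finrank_eq_two (hK : ringChar K ≠ 2) (hKL : Module.finrank K L = 2) :
    Fintype.card L / 2 = (Fintype.card K - 1) * ((Fintype.card K + 1) / 2) := by
  obtain ⟨m, hm⟩ := Nat.odd_iff.2 (FiniteField.odd_card_of_char_ne_two hK)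
  rw [card_eq_sq_of_finrank_eq_two hKL, hm, show (2 * m + 1 + 1) / 2 = m + 1 by omega,
    show (2 * m + 1) ^ 2 = 2 * (2 * m * (m + 1)) + 1 by ring, Nat.add_sub_cancel]
  omega

omit [Fintype K] in
lemma quadraticChar_algebraMap_of_finrank_eq_two [DecidableEq L] (hK : ringChar K ≠ 2)
    (hKL : Module.finrank K L = 2) {x : K} (hx : x ≠ 0) :
    quadraticChar L (algebraMap K L x) = 1 := by
  have : Finite K := Finite.of_injective _ (algebraMap K L).injective
  have := Fintype.ofFinite K
  have hL : ringChar L ≠ 2 := Algebra.ringChar_eq K L ▸ hK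
  rw [quadraticChar_eq_pow_of_char_ne_two hL (by simpa using hx),
    card_div_two_of_finrank_eq_two hK hKL, pow_mul, ← map_pow,
    FiniteField.pow_card_sub_one_eq_one x hx]
  simp

omit [Fintype K] [Fintype L] in
lemma exists_ne_zero_trace_eq_zero (hKL : 1 < Module.finrank K L) :
    ∃ δ : L, δ ≠ 0 ∧ Algebra.trace K L δ = 0 := by
  have : Module.Finite K L := Module.finite_of_finrank_pos (by omega)
  have h : LinearMap.ker (Algebra.trace K L) ≠ ⊥ :=
    LinearMap.ker_ne_bot_of_finrank_lt (by rwa [Module.finrank_self])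
  obtain ⟨δ, hδ, hδ0⟩ := Submodule.exists_mem_ne_zero_of_ne_bot h
  exact ⟨δ, hδ0, hδ⟩

lemma quadraticChar_of_trace_eq_zero [DecidableEq L] (hK : ringChar K ≠ 2)
    (hKL : Module.finrank K L = 2) {δ : L} (hδ : δ ≠ 0) (htr : Algebra.trace K L δ = 0) :
    quadraticChar L δ = (-1) ^ ((Fintype.card K + 1) / 2) := by
  have hL : ringChar L ≠ 2 := Algebra.ringChar_eq K L ▸ hK
  have pow_eq : δ ^ (Fintype.card K - 1) = -1 := by
    have h := FiniteField.algebraMap_trace_eq_sum_pow K L δ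
    rw [htr, hKL, Nat.card_eq_fintype_card, map_zero, Finset.sum_range_succ,
      Finset.sum_range_one, pow_zero, pow_one, pow_one] at h
    rw [pow_sub₀ δ hδ Fintype.card_pos, pow_one, ← div_eq_mul_inv, div_eq_iff hδ]
    linear_combination -h
  rw [quadraticChar_eq_pow_of_char_ne_two hL hδ, card_div_two_of_finrank_eq_two hK hKL, pow_mul,
    pow_eq]
  rcases Nat.even_or_odd ((Fintype.card K + 1) / 2) with h | h
  · simp [h.neg_one_pow]
  · simp [h.neg_one_pow, Ring.neg_one_ne_one_of_char_ne_two hL]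

lemma sum_mulChar_trace_eq_zero {R : Type*} [CommRing R] {χ : MulChar L R}
    (hχK : ∀ x : K, x ≠ 0 → χ (algebraMap K L x) = 1) (hKL : Module.finrank K L = 2)
    {δ : L} (hδ : δ ≠ 0) (htr : Algebra.trace K L δ = 0) [DecidableEq K] :
    ∑ y with Algebra.trace K L y = 0, χ y = (Fintype.card K - 1) * χ δ := by
  have ker_eq (y : L) (hy : Algebra.trace K L y = 0) : ∃ x : K, x • δ = y := by
    have hker : Module.finrank K (LinearMap.ker (Algebra.trace K L)) = 1 := by
      have h := (Algebra.trace K L).finrank_range_add_finrank_ker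
      rw [LinearMap.range_eq_top.2 (Algebra.trace_surjective K L), finrank_top,
        Module.finrank_self, hKL] at h
      omega
    obtain ⟨x, hx⟩ := (finrank_eq_one_iff_of_nonzero' (⟨δ, htr⟩ : LinearMap.ker _)
      (by simpa [Subtype.ext_iff] using hδ)).1 hker ⟨y, hy⟩
    exact ⟨x, congrArg Subtype.val hx⟩
  calc ∑ y with Algebra.trace K L y = 0, χ y
      = ∑ x : K, χ (x • δ) := by
        symm
        refine Finset.sum_bij (fun x _ => x • δ) (fun x _ => by simp [htr])
          (fun x _ y _ h => smul_left_injective K hδ h) (fun y hy => ?_) fun _ _ => rfl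
        simpa using ker_eq y (by simpa using hy)
    _ = ∑ x : K, (if x = 0 then 0 else 1) * χ δ := by
        refine Finset.sum_congr rfl fun x _ => ?_
        split_ifs with hx
        · rw [hx, zero_smul, MulChar.map_zero, zero_mul]
        · rw [Algebra.smul_def, map_mul, hχK x hx]
    _ = (Fintype.card K - 1) * χ δ := by
        rw [← Finset.sum_mul]
        simp [Finset.sum_ite, Finset.filter_ne', Nat.cast_sub Fintype.card_pos]

/-- Stickelberger's theorem for a quadratic extension: averaging over the dilations by `Kˣ` turns
the Gauss sum into a sum over the kernel of the trace, which is the line `K δ`. -/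
theorem gaussSum_compTrace_of_finrank_eq_two {R : Type*} [CommRing R] [IsDomain R] [CharZero R]
    {χ : MulChar L R} (hχ : χ ≠ 1) (hχK : ∀ x : K, x ≠ 0 → χ (algebraMap K L x) = 1)
    (hKL : Module.finrank K L = 2) {ψ : AddChar K R} (hψ : ψ ≠ 1)
    {δ : L} (hδ : δ ≠ 0) (htr : Algebra.trace K L δ = 0) :
    gaussSum χ (ψ.compAddMonoidHom (Algebra.trace K L).toAddMonoidHom) =
      Fintype.card K * χ δ := by
  classical
  set Ψ := ψ.compAddMonoidHom (Algebra.trace K L).toAddMonoidHom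
  have sum_by_rows (x : K) : ∑ y : L, χ y * Ψ (x • y) = if x = 0 then 0 else gaussSum χ Ψ := by
    split_ifs with hx
    · simpa [hx] using MulChar.sum_eq_zero_of_ne_one hχ
    · have hx' : algebraMap K L x ≠ 0 := by simpa using hx
      rw [← gaussSum_mulShift χ Ψ (Units.mk0 _ hx'), Units.val_mk0, hχK x hx, one_mul]
      simp only [gaussSum, AddChar.mulShift_apply, Algebra.smul_def]
  have sum_by_columns (y : L) : ∑ x : K, χ y * Ψ (x • y) =
      if Algebra.trace K L y = 0 then Fintype.card K * χ y else 0 := by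
    have h := AddChar.sum_mulShift (Algebra.trace K L y) (AddChar.IsPrimitive.of_ne_one hψ)
    have hΨ (x : K) : Ψ (x • y) = ψ (x * Algebra.trace K L y) := by simp [Ψ]
    simp_rw [← Finset.mul_sum, hΨ, h]
    split_ifs
    · rw [mul_comm]
    · rw [Nat.cast_zero, mul_zero]
  have card_sub_one_ne_zero : (Fintype.card K - 1 : R) ≠ 0 :=
    sub_ne_zero.2 (mod_cast Fintype.one_lt_card.ne')
  apply mul_left_cancel₀ card_sub_one_ne_zero
  calc (Fintype.card K - 1 : R) * gaussSum χ Ψ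
      = ∑ x : K, ∑ y : L, χ y * Ψ (x • y) := by
        simp [sum_by_rows, Finset.sum_ite, Finset.filter_ne', Nat.cast_sub Fintype.card_pos]
    _ = Fintype.card K * ∑ y with Algebra.trace K L y = 0, χ y := by
        rw [Finset.sum_comm, Finset.sum_congr rfl fun y _ => sum_by_columns y,
          ← Finset.sum_filter, Finset.mul_sum]
    _ = (Fintype.card K - 1) * (Fintype.card K * χ δ) := by
        rw [sum_mulChar_trace_eq_zero hχK hKL hδ htr]
        ring

end QuadraticExtension

section CanonicalCharacter

/-- The canonical additive character `x ↦ ζ_p^{Tr(x)}` of a finite field of characteristic `p`,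
bundled as an `AddChar` so that the theory of Gauss sums applies; it agrees with `psiL`. -/
def canonicalAddChar (p : ℕ) [Fact p.Prime] (F : Type*) [Field F] [CharP F p] : AddChar F ℂ :=
  letI : Algebra (ZMod p) F := ZMod.algebra F p
  ZMod.stdAddChar.compAddMonoidHom (Algebra.trace (ZMod p) F).toAddMonoidHom

variable (p : ℕ) [Fact p.Prime]

lemma canonicalAddChar_apply {L : Type} [Field L] [Fintype L] [CharP L p] (x : L) :
    canonicalAddChar p L x = psiL p L x := by
  let : Algebra (ZMod p) L := ZMod.algebra L p
  have h := ZMod.stdAddChar_coe (N := p) ((Algebra.trace (ZMod p) L x).val : ℤ)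
  rw [Int.cast_natCast, ZMod.natCast_zmod_val] at h
  change ZMod.stdAddChar (Algebra.trace (ZMod p) L x) = zetaP p ^ (Algebra.trace (ZMod p) L x).val
  rw [h, zetaP, ← Complex.exp_nat_mul]
  push_cast
  ring_nf

lemma canonicalAddChar_ne_one (F : Type*) [Field F] [Finite F] [CharP F p] :
    canonicalAddChar p F ≠ 1 := by
  let : Algebra (ZMod p) F := ZMod.algebra F p
  obtain ⟨x, hx⟩ := Algebra.trace_surjective (ZMod p) F 1
  refine (AddChar.ne_one_iff).2 ⟨x, fun h => one_ne_zero (α := ZMod p) ?_⟩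
  rw [← hx]
  apply ZMod.injective_stdAddChar
  rw [AddChar.map_zero_eq_one]
  exact h

lemma canonicalAddChar_compTrace (K L : Type*) [Field K] [Finite K] [Field L] [Finite L]
    [Algebra K L] [CharP K p] [CharP L p] :
    (canonicalAddChar p K).compAddMonoidHom (Algebra.trace K L).toAddMonoidHom =
      canonicalAddChar p L := by
  let : Algebra (ZMod p) K := ZMod.algebra K p
  let : Algebra (ZMod p) L := ZMod.algebra L p
  have : IsScalarTower (ZMod p) K L := IsScalarTower.of_algebraMap_eq' (Subsingleton.elim _ _)
  ext x
  exact congrArg ZMod.stdAddChar (Algebra.trace_trace (R := ZMod p) (S := K) x)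

/-- The Gauss sum of the quadratic character of `L` at the canonical additive character. -/
def quadraticGaussSum (L : Type*) [Field L] [Fintype L] [DecidableEq L] [CharP L p] : ℂ :=
  gaussSum (complexQuadraticChar L) (canonicalAddChar p L)

theorem quadraticGaussSum_of_finrank_eq_two {K L : Type*} [Field K] [Fintype K] [Field L]
    [Fintype L] [DecidableEq L] [Algebra K L] [CharP L p] (hK : ringChar K ≠ 2)
    (hKL : Module.finrank K L = 2) :
    quadraticGaussSum p L = (-1) ^ ((Fintype.card K + 1) / 2) * Fintype.card K := by
  have : CharP K p := (RingHom.charP_iff _ (algebraMap K L).injective p).2 ‹_›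
  have hL : ringChar L ≠ 2 := Algebra.ringChar_eq K L ▸ hK
  obtain ⟨δ, hδ, htr⟩ := exists_ne_zero_trace_eq_zero (K := K) (L := L) (by omega)
  rw [quadraticGaussSum, ← canonicalAddChar_compTrace p K L,
    gaussSum_compTrace_of_finrank_eq_two (complexQuadraticChar_ne_one hL)
      (fun x hx => by simp [quadraticChar_algebraMap_of_finrank_eq_two hK hKL hx])
      hKL (canonicalAddChar_ne_one p K) hδ htr,
    MulChar.ringHomComp_apply, quadraticChar_of_trace_eq_zero hK hKL hδ htr, mul_comm]
  simp

end CanonicalCharacter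

section CharacterSums

variable {p : ℕ} {L : Type} [Field L] [Fintype L] [CharP L p] {ω : L}

lemma psiSum_union {E E' : Set (L × L)} (h : Disjoint E E') (a b : L) :
    psiSum p L a b (E ∪ E') = psiSum p L a b E + psiSum p L a b E' :=
  finsum_mem_union h (Set.toFinite _) (Set.toFinite _)

lemma sum_psiL_mul [Fact p.Prime] [DecidableEq L] {a : L} (ha : a ≠ 0) (e : ℕ) :
    ∑ y with quadraticChar L y = (-1) ^ e, psiL p L (a * y) =
      (-1 + (-1) ^ e * (quadraticChar L a * quadraticGaussSum p L)) / 2 := by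
  simpa only [canonicalAddChar_apply] using!
    sum_quadraticChar_eq_neg_one_pow_mul (canonicalAddChar_ne_one p L) ha e

lemma sum_psiL_mul_inv [Fact p.Prime] [DecidableEq L] {a : L} (ha : a ≠ 0) (e : ℕ) :
    ∑ y with quadraticChar L y = (-1) ^ e, psiL p L (a * y⁻¹) =
      (-1 + (-1) ^ e * (quadraticChar L a * quadraticGaussSum p L)) / 2 := by
  rw [← sum_psiL_mul ha]
  exact Finset.sum_equiv (Equiv.inv L) (fun y => by
    simp only [Finset.mem_filter_univ, Equiv.inv_apply, quadraticChar_inv]) fun _ _ => rfl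

/-- The set `D₁` of pairs `(y, 0)` with `y ∈ C_0^{(2,q²)}`. -/
def axisPairs (ω : L) : Set (L × L) :=
  {w | ∃ y ∈ cyc L ω 2 0, w = (y, (0 : L))}

/-- The set of pairs `(xy, xy⁻¹ωⁱ)` with `x ∈ K^*`, `y ∈ C_e^{(2,q²)}` and `i ∈ S`: it is `D₂` for
`e = 0`, `S = A`, and `D₃` for `e = 1`, `S = B`. -/
def torusPairs (K : Type*) [Field K] [Algebra K L] (ω : L) (e : ℕ) (S : Set ℕ) : Set (L × L) :=
  {w | ∃ x : K, x ≠ 0 ∧ ∃ y ∈ cyc L ω 2 e, ∃ i ∈ S,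
    w = (algebraMap K L x * y, algebraMap K L x * y⁻¹ * ω ^ i)}

lemma psiSum_axisPairs [DecidableEq L] (hL : ringChar L ≠ 2) (hω : IsPrim L ω) (a b : L) :
    psiSum p L a b (axisPairs ω) = ∑ y with quadraticChar L y = (-1) ^ 0, psiL p L (a * y) := by
  have h : axisPairs ω = (fun y => (y, (0 : L))) '' {y | quadraticChar L y = (-1) ^ 0} := by
    ext w
    simp only [axisPairs, mem_cyc_two_iff hL hω, Set.mem_image, Set.mem_ofPred_eq, eq_comm]
  rw [psiSum, h, finsum_mem_image fun x _ y _ hxy => congrArg Prod.fst hxy,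
    ← finsum_mem_coe_finset]
  simp

variable {K : Type*} [Field K] [Fintype K] [Algebra K L]

omit [Fintype L] in
lemma IsPrim.eq_of_algebraMap_mul_pow_eq [DecidableEq K] (hK : ringChar K ≠ 2)
    (hKL : Module.finrank K L = 2) (hω : IsPrim L ω) {s t : K} (hs : quadraticChar K s = 1)
    (ht : quadraticChar K t = 1) {i j : ℕ} (hi : i < 2 * Fintype.card K + 2)
    (hj : j < 2 * Fintype.card K + 2)
    (h : algebraMap K L s * ω ^ i = algebraMap K L t * ω ^ j) : s = t ∧ i = j := by
  have hL : ringChar L ≠ 2 := Algebra.ringChar_eq K L ▸ hK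
  have : Module.Finite K L := Module.finite_of_finrank_pos (by omega)
  have : Finite L := Module.finite_of_finite K
  have := Fintype.ofFinite L
  set m := Fintype.card K / 2
  have card_eq : Fintype.card K = 2 * m + 1 := by
    have := FiniteField.odd_card_of_char_ne_two hK
    omega
  have m_pos : 0 < m := by
    have := Fintype.one_lt_card (α := K)
    omega
  have order_eq : orderOf ω = (2 * Fintype.card K + 2) * m := by
    rw [hω.orderOf_eq hL, card_eq_sq_of_finrank_eq_two hKL, card_eq]
    exact Nat.sub_eq_of_eq_add (by ring)
  have pow_eq : ω ^ (i * m) = ω ^ (j * m) := by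
    have hsm : s ^ m = 1 := pow_card_div_two_eq_one_of_quadraticChar_eq_one hK hs
    have htm : t ^ m = 1 := pow_card_div_two_eq_one_of_quadraticChar_eq_one hK ht
    simpa only [mul_pow, ← map_pow, hsm, htm, map_one, one_mul, ← pow_mul] using
      congrArg (· ^ m) h
  have hij : i = j := Nat.eq_of_mul_eq_mul_right m_pos <| pow_injOn_Iio_orderOf
    (order_eq ▸ Nat.mul_lt_mul_of_pos_right hi m_pos)
    (order_eq ▸ Nat.mul_lt_mul_of_pos_right hj m_pos) pow_eq
  subst hij
  exact ⟨(algebraMap K L).injective (mul_right_cancel₀ (pow_ne_zero i (hω.ne_zero hL)) h), rfl⟩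

-- The parametrization `(x, y, i) ↦ (xy, xy⁻¹ωⁱ)` is two-to-one; the coordinates `s = x²` and
-- `u = xy` make it injective.
lemma torusPairs_eq_image [DecidableEq K] [DecidableEq L] (hK : ringChar K ≠ 2)
    (hKL : Module.finrank K L = 2) (hω : IsPrim L ω) (e : ℕ) (S : Finset ℕ) :
    torusPairs K ω e S = (fun t : ℕ × K × L => (t.2.2, t.2.2⁻¹ * algebraMap K L t.2.1 * ω ^ t.1)) ''
      (S ×ˢ ({s : K | quadraticChar K s = (-1) ^ 0} : Finset K) ×ˢ
        ({u : L | quadraticChar L u = (-1) ^ e} : Finset L) : Finset (ℕ × K × L)) := by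
  have hL : ringChar L ≠ 2 := Algebra.ringChar_eq K L ▸ hK
  ext w
  simp only [torusPairs, Set.mem_ofPred_eq, mem_cyc_two_iff hL hω, Finset.mem_coe, Set.mem_image,
    Finset.mem_product, Finset.mem_filter, Finset.mem_univ, true_and, Prod.exists, pow_zero]
  constructor
  · rintro ⟨x, hx, y, hy, i, hi, rfl⟩
    refine ⟨i, x ^ 2, algebraMap K L x * y, ⟨hi, quadraticChar_sq_one' hx, ?_⟩, ?_⟩
    · rw [map_mul, quadraticChar_algebraMap_of_finrank_eq_two hK hKL hx, one_mul, hy]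
    · have : algebraMap K L x ≠ 0 := by simpa using hx
      rw [map_pow, mul_inv]
      field_simp
  · rintro ⟨i, s, u, ⟨hi, hs, hu⟩, rfl⟩
    have hs0 : s ≠ 0 := by
      rintro rfl
      simp at hs
    obtain ⟨x, rfl⟩ := (quadraticChar_one_iff_isSquare hs0).1 hs
    have hx : x ≠ 0 := left_ne_zero_of_mul hs0
    have hx' : algebraMap K L x ≠ 0 := by simpa using hx
    refine ⟨x, hx, (algebraMap K L x)⁻¹ * u, ?_, i, hi, ?_⟩
    · rw [map_mul, quadraticChar_inv, quadraticChar_algebraMap_of_finrank_eq_two hK hKL hx,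
        one_mul, hu]
    · rw [map_mul, mul_inv, inv_inv, mul_inv_cancel_left₀ hx']
      ring_nf

lemma finsum_torusPairs [DecidableEq K] [DecidableEq L] (hK : ringChar K ≠ 2)
    (hKL : Module.finrank K L = 2) (hω : IsPrim L ω) (e : ℕ) {S : Finset ℕ}
    (hS : ∀ i ∈ S, i < 2 * Fintype.card K + 2) (f : L × L → ℂ) :
    ∑ᶠ w ∈ torusPairs K ω e S, f w =
      ∑ i ∈ S, ∑ s : K with quadraticChar K s = (-1) ^ 0,
        ∑ u with quadraticChar L u = (-1) ^ e, f (u, u⁻¹ * algebraMap K L s * ω ^ i) := by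
  rw [torusPairs_eq_image hK hKL hω, finsum_mem_image, finsum_mem_coe_finset, Finset.sum_product]
  · simp only [Finset.sum_product]
  · rintro ⟨i, s, u⟩ hisu ⟨j, t, v⟩ hjtv h
    simp only [Finset.coe_product, Set.mem_prod, Finset.mem_coe, Finset.mem_filter,
      Finset.mem_univ, true_and, pow_zero] at hisu hjtv
    obtain ⟨hi, hs, hu⟩ := hisu
    obtain ⟨hj, ht, -⟩ := hjtv
    obtain ⟨rfl, h⟩ := Prod.mk.inj h
    have hu0 : u ≠ 0 := by
      rintro rfl
      exact pow_ne_zero e (by norm_num) (quadraticChar_zero.symm.trans hu).symm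
    simp only [mul_assoc] at h
    obtain ⟨rfl, rfl⟩ := hω.eq_of_algebraMap_mul_pow_eq hK hKL hs ht (hS i hi) (hS j hj)
      (mul_left_cancel₀ (inv_ne_zero hu0) h)
    rfl

omit [Fintype L] [Fintype K] in
lemma snd_ne_zero_of_mem_torusPairs (hL : ringChar L ≠ 2) (hω : IsPrim L ω) {e : ℕ} {S : Set ℕ}
    {w : L × L} (hw : w ∈ torusPairs K ω e S) : w.2 ≠ 0 := by
  obtain ⟨x, hx, _, ⟨k, rfl⟩, i, -, rfl⟩ := hw
  simp [hx, hω.ne_zero hL]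

omit [Fintype K] in
lemma quadraticChar_fst_of_mem_torusPairs [DecidableEq L] (hK : ringChar K ≠ 2)
    (hKL : Module.finrank K L = 2) (hω : IsPrim L ω) {e : ℕ} {S : Set ℕ} {w : L × L}
    (hw : w ∈ torusPairs K ω e S) : quadraticChar L w.1 = (-1) ^ e := by
  obtain ⟨x, hx, y, hy, i, -, rfl⟩ := hw
  rw [map_mul, quadraticChar_algebraMap_of_finrank_eq_two hK hKL hx, one_mul,
    (mem_cyc_two_iff (Algebra.ringChar_eq K L ▸ hK) hω).1 hy]

omit [Fintype L] [Fintype K] in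
lemma disjoint_axisPairs_torusPairs (hL : ringChar L ≠ 2) (hω : IsPrim L ω) (e : ℕ) (S : Set ℕ) :
    Disjoint (axisPairs ω) (torusPairs K ω e S) := by
  rw [Set.disjoint_left]
  rintro _ ⟨y, -, rfl⟩ hw
  exact snd_ne_zero_of_mem_torusPairs hL hω hw rfl

omit [Fintype L] [Fintype K] in
lemma disjoint_torusPairs_zero_one [Finite L] (hK : ringChar K ≠ 2) (hKL : Module.finrank K L = 2)
    (hω : IsPrim L ω) (A B : Set ℕ) : Disjoint (torusPairs K ω 0 A) (torusPairs K ω 1 B) := by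
  classical
  have := Fintype.ofFinite L
  rw [Set.disjoint_left]
  intro w hw hw'
  have h := (quadraticChar_fst_of_mem_torusPairs hK hKL hω hw).symm.trans
    (quadraticChar_fst_of_mem_torusPairs hK hKL hω hw')
  norm_num at h

variable [Fact p.Prime] [DecidableEq L]

lemma psiSum_torusPairs_left (hK : ringChar K ≠ 2) (hKL : Module.finrank K L = 2)
    (hω : IsPrim L ω) (e : ℕ) {S : Finset ℕ} (hS : ∀ i ∈ S, i < 2 * Fintype.card K + 2)
    {a : L} (ha : a ≠ 0) :
    psiSum p L a 0 (torusPairs K ω e S) = (Fintype.card K - 1) / 4 *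
      (S.card * (-1 + (-1) ^ e * (quadraticChar L a * quadraticGaussSum p L))) := by
  classical
  rw [psiSum, finsum_torusPairs hK hKL hω e hS]
  simp only [zero_mul, add_zero, sum_psiL_mul ha, Finset.sum_const, nsmul_eq_mul,
    card_quadraticChar_eq_neg_one_pow hK]
  ring

lemma psiSum_torusPairs_right (hK : ringChar K ≠ 2) (hKL : Module.finrank K L = 2)
    (hω : IsPrim L ω) (e : ℕ) {S : Finset ℕ} (hS : ∀ i ∈ S, i < 2 * Fintype.card K + 2)
    {b : L} (hb : b ≠ 0) :
    psiSum p L 0 b (torusPairs K ω e S) = (Fintype.card K - 1) / 4 *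
      (-S.card + (-1) ^ e * (quadraticChar L b * quadraticGaussSum p L) *
        ∑ i ∈ S, (-1) ^ i) := by
  classical
  have hL : ringChar L ≠ 2 := Algebra.ringChar_eq K L ▸ hK
  have inner (i : ℕ) (s : K) (hs : quadraticChar K s = (-1) ^ 0) :
      ∑ u with quadraticChar L u = (-1) ^ e,
          psiL p L (0 * u + b * (u⁻¹ * algebraMap K L s * ω ^ i)) =
        (-1 + (-1) ^ e * (quadraticChar L b * quadraticGaussSum p L) * (-1) ^ i) / 2 := by
    have hs0 : s ≠ 0 := by
      rintro rfl
      simp at hs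
    have hbs : b * algebraMap K L s * ω ^ i ≠ 0 :=
      mul_ne_zero (mul_ne_zero hb (by simpa using hs0)) (pow_ne_zero i (hω.ne_zero hL))
    have h := sum_psiL_mul_inv (p := p) hbs e
    rw [map_mul, map_mul, map_pow, hω.quadraticChar_eq_neg_one hL,
      quadraticChar_algebraMap_of_finrank_eq_two hK hKL hs0, mul_one] at h
    push_cast at h
    calc _ = _ := Finset.sum_congr rfl fun u _ => by ring_nf
      _ = _ := h
      _ = _ := by ring
  rw [psiSum, finsum_torusPairs hK hKL hω e hS]
  calc _ = ∑ i ∈ S, (Fintype.card K - 1) / 4 *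
        (-1 + (-1) ^ e * (quadraticChar L b * quadraticGaussSum p L) * (-1) ^ i) := by
        refine Finset.sum_congr rfl fun i _ => ?_
        rw [Finset.sum_congr rfl fun s hs => inner i s (Finset.mem_filter.1 hs).2,
          Finset.sum_const, nsmul_eq_mul, card_quadraticChar_eq_neg_one_pow hK]
        ring
    _ = _ := by
        rw [← Finset.mul_sum, Finset.sum_add_distrib, ← Finset.mul_sum]
        simp

end CharacterSums

section WilsonXiang

variable {p : ℕ} {K : Type*} {L : Type} [Field K] [Fintype K] [Field L] [Fintype L] [Algebra K L]
  [CharP L p] {ω : L}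

/-- The set `E₁ = D₁ ∪ D₂ ∪ D₃` attached to index sets `A` and `B`. -/
def wilsonXiangSet (K : Type*) [Field K] [Algebra K L] (ω : L) (A B : Set ℕ) : Set (L × L) :=
  axisPairs ω ∪ torusPairs K ω 0 A ∪ torusPairs K ω 1 B

omit [Fintype K] in
lemma psiSum_wilsonXiangSet (hK : ringChar K ≠ 2) (hKL : Module.finrank K L = 2)
    (hω : IsPrim L ω) (A B : Set ℕ) (a b : L) :
    psiSum p L a b (wilsonXiangSet K ω A B) = psiSum p L a b (axisPairs ω) +
      psiSum p L a b (torusPairs K ω 0 A) + psiSum p L a b (torusPairs K ω 1 B) := by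
  have hL : ringChar L ≠ 2 := Algebra.ringChar_eq K L ▸ hK
  rw [wilsonXiangSet, psiSum_union, psiSum_union (disjoint_axisPairs_torusPairs hL hω 0 A)]
  exact Set.disjoint_union_left.2
    ⟨disjoint_axisPairs_torusPairs hL hω 1 B, disjoint_torusPairs_zero_one hK hKL hω A B⟩

lemma psiSum_wilsonXiangSet_left [Fact p.Prime] [DecidableEq L] (hK : ringChar K ≠ 2)
    (hKL : Module.finrank K L = 2) (hω : IsPrim L ω) {A B : Finset ℕ}
    (hA : ∀ i ∈ A, i < 2 * Fintype.card K + 2) (hB : ∀ i ∈ B, i < 2 * Fintype.card K + 2)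
    {a : L} (ha : a ≠ 0) :
    psiSum p L a 0 (wilsonXiangSet K ω A B) =
      (-1 + quadraticChar L a * quadraticGaussSum p L) / 2 + (Fintype.card K - 1) / 4 *
        ((A.card - B.card) * (quadraticChar L a * quadraticGaussSum p L) -
          (A.card + B.card)) := by
  rw [psiSum_wilsonXiangSet hK hKL hω, psiSum_axisPairs (Algebra.ringChar_eq K L ▸ hK) hω,
    sum_psiL_mul ha, psiSum_torusPairs_left hK hKL hω 0 hA ha,
    psiSum_torusPairs_left hK hKL hω 1 hB ha]
  ring

lemma psiSum_wilsonXiangSet_right [Fact p.Prime] [DecidableEq L] (hK : ringChar K ≠ 2)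
    (hKL : Module.finrank K L = 2) (hω : IsPrim L ω) {A B : Finset ℕ}
    (hA : ∀ i ∈ A, i < 2 * Fintype.card K + 2) (hB : ∀ i ∈ B, i < 2 * Fintype.card K + 2)
    {b : L} (hb : b ≠ 0) :
    psiSum p L 0 b (wilsonXiangSet K ω A B) =
      (Fintype.card K ^ 2 - 1) / 2 + (Fintype.card K - 1) / 4 *
        ((∑ i ∈ A, (-1) ^ i - ∑ i ∈ B, (-1) ^ i) *
          (quadraticChar L b * quadraticGaussSum p L) - (A.card + B.card)) := by
  have hL : ringChar L ≠ 2 := Algebra.ringChar_eq K L ▸ hK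
  have psiL_zero : psiL p L 0 = 1 := by
    rw [← canonicalAddChar_apply, AddChar.map_zero_eq_one]
  rw [psiSum_wilsonXiangSet hK hKL hω, psiSum_axisPairs hL hω,
    psiSum_torusPairs_right hK hKL hω 0 hA hb, psiSum_torusPairs_right hK hKL hω 1 hB hb]
  simp only [zero_mul, psiL_zero, Finset.sum_const, nsmul_eq_mul, mul_one,
    card_quadraticChar_eq_neg_one_pow hL, card_eq_sq_of_finrank_eq_two hKL]
  push_cast
  ring

lemma quadraticChar_mul_quadraticGaussSum [DecidableEq L] [Fact p.Prime] (hK : ringChar K ≠ 2)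
    (hKL : Module.finrank K L = 2) (hω : IsPrim L ω) {τ : ℕ}
    (hτ : τ = if Fintype.card K % 4 = 3 then 0 else 1) {a : L} (ha : a ≠ 0) :
    (a ∈ cyc L ω 2 (τ + 1) → quadraticChar L a * quadraticGaussSum p L = -Fintype.card K) ∧
      (a ∉ cyc L ω 2 (τ + 1) → quadraticChar L a * quadraticGaussSum p L = Fintype.card K) := by
  have hodd := FiniteField.odd_card_of_char_ne_two hK
  rw [mem_cyc_two_iff (Algebra.ringChar_eq K L ▸ hK) hω,
    quadraticGaussSum_of_finrank_eq_two p hK hKL, hτ]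
  obtain ⟨m, hm⟩ : ∃ m, (Fintype.card K + 1) / 2 = m := ⟨_, rfl⟩
  rw [hm]
  split_ifs with h
  · have hm : Even m := Nat.even_iff.2 (by omega)
    rcases quadraticChar_dichotomy ha with hχ | hχ <;> rw [hχ, hm.neg_one_pow] <;> norm_num
  · have hm : Odd m := Nat.odd_iff.2 (by omega)
    rcases quadraticChar_dichotomy ha with hχ | hχ <;> rw [hχ, hm.neg_one_pow] <;> norm_num

lemma sum_neg_one_pow_eq_ncard_sub_ncard {R : Type*} [Ring R] (S : Finset ℕ) :
    ∑ i ∈ S, (-1 : R) ^ i =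
      ((S ∩ {i | Even i} : Set ℕ).ncard : R) - (S ∩ {i | Odd i} : Set ℕ).ncard := by
  have ncard_inter (P : ℕ → Prop) [DecidablePred P] :
      (S ∩ {i | P i} : Set ℕ).ncard = (S.filter P).card := by
    rw [← Set.ncard_coe_finset, Finset.coe_filter]
    rfl
  have neg_one_pow (i : ℕ) :
      (-1 : R) ^ i = (if Even i then 1 else 0) - if Odd i then 1 else 0 := by
    rcases Nat.even_or_odd i with h | h
    · simp [h, h.neg_one_pow, Nat.not_odd_iff_even.2 h]
    · simp [h, h.neg_one_pow, Nat.not_even_iff_odd.2 h]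
  rw [ncard_inter, ncard_inter, Finset.sum_congr rfl fun i _ => neg_one_pow i,
    Finset.sum_sub_distrib, Finset.sum_boole, Finset.sum_boole]

theorem wilson_xiang_E1_char_one_zero_general {q τ : ℕ} (hp : p ≠ 2) (hK : Fintype.card K = q)
    (hL : Fintype.card L = q ^ 2) (hω : IsPrim L ω) (hτ : τ = if q % 4 = 3 then 0 else 1)
    {A B : Set ℕ} (hA : ∀ i ∈ A, i < 2 * q + 2) (hB : ∀ i ∈ B, i < 2 * q + 2)
    (hcardA : A.ncard = (q + 3) / 2) (hcardB : B.ncard = (q - 1) / 2)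
    (hpar : (A ∩ {i | Even i}).ncard + (B ∩ {i | Odd i}).ncard =
      (A ∩ {i | Odd i}).ncard + (B ∩ {i | Even i}).ncard)
    {a b : L} (hab : (a = 0 ∧ b ≠ 0) ∨ (a ≠ 0 ∧ b = 0)) :
    ((b = 0 ∧ a ∈ cyc L ω 2 (τ + 1)) →
        psiSum p L a b (wilsonXiangSet K ω A B) = (-3 * (q : ℂ) ^ 2 - 1) / 4) ∧
      (¬(b = 0 ∧ a ∈ cyc L ω 2 (τ + 1)) →
        psiSum p L a b (wilsonXiangSet K ω A B) = ((q : ℂ) ^ 2 - 1) / 4) := by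
  classical
  subst hK
  have : Fact p.Prime := ⟨CharP.char_is_prime L p⟩
  have hK2 : ringChar K ≠ 2 := by rwa [Algebra.ringChar_eq K L, ringChar.eq L p]
  have hKL : Module.finrank K L = 2 := Nat.pow_right_injective Fintype.one_lt_card
    (Module.card_eq_pow_finrank.symm.trans hL)
  lift A to Finset ℕ using (Set.finite_Iio _).subset hA
  lift B to Finset ℕ using (Set.finite_Iio _).subset hB
  rw [Set.ncard_coe_finset] at hcardA hcardB
  have hodd := FiniteField.odd_card_of_char_ne_two hK2
  have card_sub : (A.card : ℂ) - B.card = 2 :=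
    sub_eq_iff_eq_add'.2 (mod_cast (by omega : A.card = B.card + 2))
  have card_add : (A.card : ℂ) + B.card = Fintype.card K + 1 := mod_cast (by omega)
  rcases hab with ⟨rfl, hb⟩ | ⟨ha, rfl⟩
  · refine ⟨fun h => absurd h.1 hb, fun _ => ?_⟩
    have sum_eq : ∑ i ∈ A, (-1 : ℂ) ^ i - ∑ i ∈ B, (-1) ^ i = 0 := by
      have hparC := congrArg (Nat.cast : ℕ → ℂ) hpar
      push_cast at hparC
      rw [sum_neg_one_pow_eq_ncard_sub_ncard, sum_neg_one_pow_eq_ncard_sub_ncard]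
      linear_combination hparC
    rw [psiSum_wilsonXiangSet_right hK2 hKL hω hA hB hb, sum_eq, card_add]
    ring
  · obtain ⟨of_mem, of_not_mem⟩ := quadraticChar_mul_quadraticGaussSum (p := p) hK2 hKL hω hτ ha
    rw [psiSum_wilsonXiangSet_left hK2 hKL hω hA hB ha, card_sub, card_add]
    refine ⟨fun h => ?_, fun h => ?_⟩
    · rw [of_mem h.2]
      ring
    · rw [of_not_mem fun ha' => h ⟨rfl, ha'⟩]
      ring

end WilsonXiang

/-- Lemma 4.3: character values of `E₁ = D₁ ∪ D₂ ∪ D₃` when exactly one of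
`a, b` is zero. -/
theorem wilson_xiang_E1_char_one_zero
    (p s q : ℕ) (hp : p.Prime) (hpodd : p ≠ 2) (hs : 0 < s) (hq : q = p ^ s)
    (K L : Type) [Field K] [Fintype K] [Field L] [Fintype L] [Algebra K L] [CharP L p]
    (hK : Fintype.card K = q) (hL : Fintype.card L = q ^ 2)
    (ω : L) (hω : IsPrim L ω)
    (c : ℕ) (hc : c < 2 * q + 2) (hcodd : Odd c)
    (I₁ I₂ J₁ J₂ : Set ℕ)
    (hI₁ : I₁ = {i | i < 2 * q + 2 ∧ Algebra.trace K L (ω ^ i) = 0})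
    (hI₂ : I₂ = {i | i < 2 * q + 2 ∧ Algebra.trace K L (ω ^ i) ∈ sqSet K})
    (hJ₁ : J₁ = {i | i < 2 * q + 2 ∧ Algebra.trace K L (ω ^ (i + c)) = 0})
    (hJ₂ : J₂ = {i | i < 2 * q + 2 ∧ Algebra.trace K L (ω ^ (i + c)) ∈ sqSet K})
    (X₁c X₃c : Set ℕ)
    (hX₁c : X₁c = (I₁ ∩ J₂) ∪ (I₂ ∩ J₁)) (hX₃c : X₃c = I₂ ∩ J₂)
    (τ : ℕ) (hτ : τ = if q % 4 = 3 then 0 else 1)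
    (A B : Set ℕ) (hA : ∀ i ∈ A, i < 2 * q + 2) (hB : ∀ i ∈ B, i < 2 * q + 2)
    (hAB : A ∩ B = X₃c) (hABsym : (A \ B) ∪ (B \ A) = X₁c)
    (D₀ D₁ D₂ D₃ : Set (L × L))
    (hD₀ : D₀ = {w | ∃ y ∈ cyc L ω 2 τ, w = ((0 : L), y)})
    (hD₁ : D₁ = {w | ∃ y ∈ cyc L ω 2 0, w = (y, (0 : L))})
    (hD₂ : D₂ = {w | ∃ x : K, x ≠ 0 ∧ ∃ y ∈ cyc L ω 2 0, ∃ i ∈ A,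
      w = (algebraMap K L x * y, algebraMap K L x * y⁻¹ * ω ^ i)})
    (hD₃ : D₃ = {w | ∃ x : K, x ≠ 0 ∧ ∃ y ∈ cyc L ω 2 1, ∃ i ∈ B,
      w = (algebraMap K L x * y, algebraMap K L x * y⁻¹ * ω ^ i)})
    (hcardA : A.ncard = (q + 3) / 2) (hcardB : B.ncard = (q - 1) / 2)
    (hpar : (A ∩ {i | Even i}).ncard + (B ∩ {i | Odd i}).ncard =
      (A ∩ {i | Odd i}).ncard + (B ∩ {i | Even i}).ncard)
    : ∀ a b : L, ((a = 0 ∧ b ≠ 0) ∨ (a ≠ 0 ∧ b = 0)) →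
      ((b = 0 ∧ a ∈ cyc L ω 2 (τ + 1)) →
        psiSum p L a b (D₁ ∪ D₂ ∪ D₃) = (-3 * (q : ℂ) ^ 2 - 1) / 4) ∧
      (¬(b = 0 ∧ a ∈ cyc L ω 2 (τ + 1)) →
        psiSum p L a b (D₁ ∪ D₂ ∪ D₃) = ((q : ℂ) ^ 2 - 1) / 4) := by
  subst hD₁ hD₂ hD₃
  exact fun a b hab =>
    wilson_xiang_E1_char_one_zero_general hpodd hK hL hω hτ hA hB hcardA hcardB hpar hab

end
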